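/- Let μ be a Borel probability measure on the unit cube [0,1)^d ⊆ ℝ^d which assigns zero mass to the boundary of every dyadic cube. Then for μ-almost every x, limsup_{n→∞} (−log₂ μ(Q_n(x)))/n = limsup_{r→0} log μ(B(x,r))/log r, and liminf_{n→∞} (−log₂ μ(Q_n(x)))/n = liminf_{r→0} log μ(B(x,r))/log r. -/

import Mathlib

open MeasureTheory Filter Metric Set

/-- The lower local dimension of a measure at a point:
`liminf_{r→0} log μ(B(x,r)) / log r`. -/
noncomputable def lowerLocalDim {X : Type*} [MetricSpace X] [MeasurableSpace X]
    (μ : Measure X) (x : X) : EReal :=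
  Filter.liminf (fun r : ℝ =>
    ((Real.log (μ (Metric.ball x r)).toReal / Real.log r : ℝ) : EReal))
    (nhdsWithin 0 (Set.Ioi 0))

/-- The upper local dimension of a measure at a point:
`limsup_{r→0} log μ(B(x,r)) / log r`. -/
noncomputable def upperLocalDim {X : Type*} [MetricSpace X] [MeasurableSpace X]
    (μ : Measure X) (x : X) : EReal :=
  Filter.limsup (fun r : ℝ =>
    ((Real.log (μ (Metric.ball x r)).toReal / Real.log r : ℝ) : EReal))
    (nhdsWithin 0 (Set.Ioi 0))

/-- The half-open dyadic cell of level `n` with index `j`, i.e. `∏ᵢ [jᵢ/2ⁿ, (jᵢ+1)/2ⁿ)`. -/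
def dyadicCell (d n : ℕ) (j : Fin d → ℤ) : Set (EuclideanSpace ℝ (Fin d)) :=
  {y | ∀ i, (j i : ℝ) / 2 ^ n ≤ y i ∧ y i < ((j i : ℝ) + 1) / 2 ^ n}

/-- The index of the level-`n` dyadic cube containing `x`. -/
noncomputable def dyadicIdx (d n : ℕ) (x : EuclideanSpace ℝ (Fin d)) : Fin d → ℤ :=
  fun i => ⌊(2 : ℝ) ^ n * x i⌋

/-- `Q_n(x)`: the (unique) half-open dyadic cube of level `n` containing `x`. -/
noncomputable def Qcube (d n : ℕ) (x : EuclideanSpace ℝ (Fin d)) :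
    Set (EuclideanSpace ℝ (Fin d)) :=
  dyadicCell d n (dyadicIdx d n x)

/-- `Q` is a dyadic cube (of some level) inside the unit cube `[0,1)^d`. -/
def IsDyadicCube (d : ℕ) (Q : Set (EuclideanSpace ℝ (Fin d))) : Prop :=
  ∃ (n : ℕ) (j : Fin d → ℤ), (∀ i, 0 ≤ j i ∧ j i < 2 ^ n) ∧ Q = dyadicCell d n j

/-- The half-open unit cube `[0,1)^d`. -/
def unitCube (d : ℕ) : Set (EuclideanSpace ℝ (Fin d)) := dyadicCell d 0 0


lemma core_bound {α : Type*} {F : Filter α} {u v w e : α → ℝ}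
    (hw : Tendsto w F (nhds 1)) (he : Tendsto e F (nhds 0))
    (h : ∀ᶠ a in F, u a ≤ w a * v a + e a) (c' c : ℝ) (hc : c' < c) :
    ∀ᶠ a in F, v a < c' → u a ≤ c := by
  have h1 : Tendsto (fun a => w a * c' + e a) F (nhds (1 * c' + 0)) :=
    (hw.mul_const c').add he
  have h2 : ∀ᶠ a in F, w a * c' + e a < c := h1.eventually_lt_const (by linarith)
  have h3 : ∀ᶠ a in F, 0 < w a := hw.eventually_const_lt (by norm_num)
  filter_upwards [h, h2, h3] with a h h2 h3 hv
  nlinarith [mul_lt_mul_of_pos_left hv h3]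

lemma core_limsup {α : Type*} {F : Filter α} {u v w e : α → ℝ}
    (hw : Tendsto w F (nhds 1)) (he : Tendsto e F (nhds 0))
    (h : ∀ᶠ a in F, u a ≤ w a * v a + e a) :
    limsup (fun a => (u a : EReal)) F ≤ limsup (fun a => (v a : EReal)) F := by
  refine le_of_forall_gt_imp_ge_of_dense fun c hc => ?_
  obtain ⟨c1, h1, h2⟩ := EReal.lt_iff_exists_real_btwn.1 hc
  obtain ⟨c2, h3, h4⟩ := EReal.lt_iff_exists_real_btwn.1 h2
  refine le_trans ?_ h4.le
  have hv := eventually_lt_of_limsup_lt h1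
  refine limsup_le_of_le (by isBoundedDefault) ?_
  filter_upwards [hv, core_bound hw he h c1 c2 (by exact_mod_cast h3)] with a ha hb
  exact_mod_cast hb (by exact_mod_cast ha)

lemma core_liminf {α : Type*} {F : Filter α} {u v w e : α → ℝ}
    (hw : Tendsto w F (nhds 1)) (he : Tendsto e F (nhds 0))
    (h : ∀ᶠ a in F, u a ≤ w a * v a + e a) :
    liminf (fun a => (u a : EReal)) F ≤ liminf (fun a => (v a : EReal)) F := by
  refine le_of_forall_gt_imp_ge_of_dense fun c hc => ?_
  obtain ⟨c1, h1, h2⟩ := EReal.lt_iff_exists_real_btwn.1 hc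
  obtain ⟨c2, h3, h4⟩ := EReal.lt_iff_exists_real_btwn.1 h2
  refine le_trans ?_ h4.le
  have hv := frequently_lt_of_liminf_lt (by isBoundedDefault) h1
  refine liminf_le_of_frequently_le ?_ (by isBoundedDefault)
  refine (hv.and_eventually (core_bound hw he h c1 c2 (by exact_mod_cast h3))).mono ?_
  rintro a ⟨ha, hb⟩
  exact_mod_cast hb (by exact_mod_cast ha)

lemma limsup_comp_le' {α β : Type*} {F : Filter α} {G : Filter β} {φ : α → β}
    (h : Tendsto φ F G) (v : β → EReal) : limsup (fun a => v (φ a)) F ≤ limsup v G :=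
  limsup_le_limsup_of_le (f := map φ F) h (by isBoundedDefault) (by isBoundedDefault)

lemma liminf_le_comp' {α β : Type*} {F : Filter α} {G : Filter β} {φ : α → β}
    (h : Tendsto φ F G) (v : β → EReal) : liminf v G ≤ liminf (fun a => v (φ a)) F :=
  liminf_le_liminf_of_le (g := map φ F) h (by isBoundedDefault) (by isBoundedDefault)

lemma tendsto_err : Tendsto (fun n : ℕ => 2 * Real.logb 2 ((n : ℝ) + 1) / n) atTop (nhds 0) := by
  have h1 : Tendsto (fun x : ℝ => Real.log x / x) atTop (nhds 0) := by
    simpa using Real.isLittleO_log_id_atTop.tendsto_div_nhds_zero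
  have hn : Tendsto (fun n : ℕ => (n : ℝ) + 1) atTop atTop :=
    tendsto_atTop_add_const_right _ _ tendsto_natCast_atTop_atTop
  have h2 := h1.comp hn
  have h3 : Tendsto (fun n : ℕ => ((n : ℝ) + 1) / n) atTop (nhds 1) := by
    have : Tendsto (fun n : ℕ => 1 + ((n : ℝ))⁻¹) atTop (nhds (1 + 0)) :=
      tendsto_const_nhds.add tendsto_inv_atTop_nhds_zero_nat
    rw [add_zero] at this
    refine this.congr' ?_
    filter_upwards [eventually_gt_atTop 0] with n hn
    have : (0 : ℝ) < n := by exact_mod_cast hn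
    field_simp
  have h4 := (h2.mul h3).const_mul (2 / Real.log 2)
  simp only [zero_mul, mul_zero] at h4
  refine h4.congr' ?_
  filter_upwards [eventually_gt_atTop 0] with n hn
  have : (0 : ℝ) < n := by exact_mod_cast hn
  have hl : Real.log 2 ≠ 0 := (Real.log_pos (by norm_num)).ne'
  simp only [Function.comp, Real.logb]
  field_simp

lemma analysis (d : ℕ) (a : ℕ → ℝ) (b : ℝ → ℝ)
    (hb : ∀ r s, 0 < r → r ≤ s → b s ≤ b r)
    (h1 : ∀ m : ℕ, b (((2 : ℝ) ^ m)⁻¹) ≤ a (m + d))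
    (h2 : ∀ᶠ n : ℕ in atTop, a n ≤ b (((2 : ℝ) ^ n)⁻¹) + 2 * Real.logb 2 ((n : ℝ) + 1)) :
    limsup (fun n : ℕ => ((a n / n : ℝ) : EReal)) atTop =
      limsup (fun r : ℝ => ((b r / (-Real.logb 2 r) : ℝ) : EReal)) (nhdsWithin 0 (Ioi 0)) ∧
    liminf (fun n : ℕ => ((a n / n : ℝ) : EReal)) atTop =
      liminf (fun r : ℝ => ((b r / (-Real.logb 2 r) : ℝ) : EReal)) (nhdsWithin 0 (Ioi 0)) := by
  set T : ℝ → ℝ := fun r => -Real.logb 2 r with hT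
  have hTt : Tendsto T (nhdsWithin 0 (Ioi 0)) atTop :=
    tendsto_neg_atBot_atTop.comp (Real.tendsto_logb_nhdsGT_zero (by norm_num))
  have hφ : Tendsto (fun n : ℕ => ((2 : ℝ) ^ n)⁻¹) atTop (nhdsWithin 0 (Ioi 0)) :=
    tendsto_inv_atTop_nhdsGT_zero.comp
      (tendsto_pow_atTop_atTop_of_one_lt (by norm_num : (1 : ℝ) < 2))
  have hN : Tendsto (fun r => ⌊T r⌋₊) (nhdsWithin 0 (Ioi 0)) atTop :=
    (tendsto_nat_floor_atTop (α := ℝ)).comp hTt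
  have hTp : ∀ n : ℕ, T (((2 : ℝ) ^ n)⁻¹) = n := by
    intro n
    simp [hT, Real.logb_inv, Real.logb_pow]
  have hrT : ∀ r : ℝ, 0 < r → r = ((2 : ℝ) ^ (T r))⁻¹ := by
    intro r hr
    rw [← Real.rpow_neg (by norm_num), hT]
    simp only [neg_neg]
    rw [Real.rpow_logb (by norm_num) (by norm_num) hr]
  have hlow : ∀ r : ℝ, 0 < r → 0 < T r → r ≤ ((2 : ℝ) ^ ⌊T r⌋₊)⁻¹ := by
    intro r hr ht
    conv_lhs => rw [hrT r hr]
    rw [← Real.rpow_natCast]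
    gcongr
    · norm_num
    · exact Nat.floor_le ht.le
  have hup : ∀ r : ℝ, 0 < r → 0 < T r → ((2 : ℝ) ^ (⌊T r⌋₊ + 1))⁻¹ ≤ r := by
    intro r hr ht
    conv_rhs => rw [hrT r hr]
    rw [← Real.rpow_natCast]
    gcongr
    · norm_num
    · push_cast; exact (Nat.lt_floor_add_one _).le
  have hpos : ∀ᶠ r : ℝ in nhdsWithin 0 (Ioi 0), 0 < r := self_mem_nhdsWithin
  have hw1 : Tendsto (fun r => (⌊T r⌋₊ : ℝ) / T r) (nhdsWithin 0 (Ioi 0)) (nhds 1) :=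
    (tendsto_nat_floor_div_atTop (R := ℝ)).comp hTt
  refine ⟨le_antisymm ?_ ?_, le_antisymm ?_ ?_⟩
  · refine le_trans ?_ (limsup_comp_le' hφ _)
    refine core_limsup (w := fun _ => 1) tendsto_const_nhds tendsto_err ?_
    filter_upwards [h2, eventually_gt_atTop 0] with n hn hn0
    have : (0 : ℝ) < n := by exact_mod_cast hn0
    have hh : -Real.logb 2 (((2 : ℝ) ^ n)⁻¹) = n := hTp n
    rw [hh, one_mul, ← add_div]
    gcongr
  · refine le_trans ?_ (limsup_comp_le' (φ := fun r => ⌊T r⌋₊ + 1 + d)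
      (tendsto_atTop_mono (fun r => by omega) hN) _)
    refine core_limsup (w := fun r => (⌊T r⌋₊ : ℝ) / T r + (1 + d) * (T r)⁻¹) (e := fun _ => 0)
      ?_ tendsto_const_nhds ?_
    · simpa using hw1.add ((tendsto_inv_atTop_zero.comp hTt).const_mul (1 + d : ℝ))
    · filter_upwards [hpos, hTt.eventually_gt_atTop 0] with r hr ht
      have hm := h1 (⌊T r⌋₊ + 1)
      have := hb _ _ (by positivity) (hup r hr ht)
      change b r / T r ≤ _
      have e1 : ((⌊T r⌋₊ : ℝ) / T r + (1 + d) * (T r)⁻¹) *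
          (a (⌊T r⌋₊ + 1 + d) / ((⌊T r⌋₊ + 1 + d : ℕ) : ℝ)) + 0 = a (⌊T r⌋₊ + 1 + d) / T r := by
        push_cast
        field_simp
        ring
      rw [e1]
      gcongr
      linarith
  · refine le_trans (liminf_le_comp' hN _) ?_
    refine core_liminf (w := fun r => ((⌊T r⌋₊ : ℝ) / T r)⁻¹)
      (e := fun r => 2 * Real.logb 2 ((⌊T r⌋₊ : ℝ) + 1) / ⌊T r⌋₊) ?_ (tendsto_err.comp hN) ?_
    · simpa using hw1.inv₀ one_ne_zero
    · filter_upwards [hpos, hTt.eventually_gt_atTop 0, hN.eventually h2,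
        hN.eventually (eventually_gt_atTop 0)] with r hr ht h hn0
      have hn : (0 : ℝ) < ⌊T r⌋₊ := by exact_mod_cast hn0
      have := hb _ _ hr (hlow r hr ht)
      change _ ≤ _ * (b r / T r) + _
      have e1 : ((⌊T r⌋₊ : ℝ) / T r)⁻¹ * (b r / T r) + 2 * Real.logb 2 ((⌊T r⌋₊ : ℝ) + 1) / ⌊T r⌋₊
          = (b r + 2 * Real.logb 2 ((⌊T r⌋₊ : ℝ) + 1)) / ⌊T r⌋₊ := by
        field_simp
      rw [e1]
      gcongr
      linarith
  · rw [← liminf_nat_add (fun n : ℕ => ((a n / n : ℝ) : EReal)) d]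
    refine le_trans (liminf_le_comp' hφ _) ?_
    refine core_liminf (w := fun n : ℕ => 1 + (d : ℝ) * (n : ℝ)⁻¹) (e := fun _ => 0)
      ?_ tendsto_const_nhds ?_
    · simpa using (tendsto_inv_atTop_nhds_zero_nat (𝕜 := ℝ)).const_mul (d : ℝ) |>.const_add 1
    · filter_upwards [eventually_gt_atTop 0] with n hn0
      have hn : (0 : ℝ) < n := by exact_mod_cast hn0
      have hh : -Real.logb 2 (((2 : ℝ) ^ n)⁻¹) = n := hTp n
      rw [hh]
      have e1 : (1 + (d : ℝ) * (n : ℝ)⁻¹) * (a (n + d) / ((n + d : ℕ) : ℝ)) + 0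
          = a (n + d) / n := by
        push_cast
        field_simp
        ring
      rw [e1]
      gcongr
      exact h1 n

lemma mem_cell_iff {d n : ℕ} {j : Fin d → ℤ} {y : EuclideanSpace ℝ (Fin d)} :
    y ∈ dyadicCell d n j ↔ dyadicIdx d n y = j := by
  have h2 : (0 : ℝ) < 2 ^ n := by positivity
  simp only [dyadicCell, mem_ofPred_eq, funext_iff, dyadicIdx, Int.floor_eq_iff]
  refine forall_congr' fun i => ?_
  rw [div_le_iff₀ h2, lt_div_iff₀ h2, mul_comm (y i)]

lemma mem_Qcube {d n : ℕ} (x : EuclideanSpace ℝ (Fin d)) : x ∈ Qcube d n x :=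
  mem_cell_iff.2 rfl

lemma meas_cell (d n : ℕ) (j : Fin d → ℤ) : MeasurableSet (dyadicCell d n j) := by
  have : dyadicCell d n j = ⋂ i, {y : EuclideanSpace ℝ (Fin d) |
      (j i : ℝ) / 2 ^ n ≤ y i ∧ y i < ((j i : ℝ) + 1) / 2 ^ n} := by
    ext y; simp [dyadicCell]
  rw [this]
  refine MeasurableSet.iInter fun i => ?_
  have hc : Measurable fun y : EuclideanSpace ℝ (Fin d) => y i := by fun_prop
  exact (measurableSet_le measurable_const hc).inter (measurableSet_lt hc measurable_const)

lemma tsum_cell {d : ℕ} (n : ℕ) (μ : Measure (EuclideanSpace ℝ (Fin d)))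
    [IsProbabilityMeasure μ] : ∑' j, μ (dyadicCell d n j) = 1 := by
  rw [← measure_iUnion _ (fun j => meas_cell d n j)]
  · have : (⋃ j, dyadicCell d n j) = univ :=
      eq_univ_of_forall fun x => mem_iUnion.2 ⟨_, mem_Qcube x⟩
    rw [this, measure_univ]
  · intro i j hij
    refine disjoint_left.2 fun x hx hx' => hij ?_
    rw [← mem_cell_iff.1 hx, ← mem_cell_iff.1 hx']

lemma ball_sub_cells (d n : ℕ) (x : EuclideanSpace ℝ (Fin d)) :
    ball x (((2 : ℝ) ^ n)⁻¹) ⊆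
      ⋃ k : Fin d → Fin 3, dyadicCell d n (dyadicIdx d n x + fun i => ((k i : ℕ) : ℤ) - 1) := by
  intro y hy
  have h2 : (0 : ℝ) < 2 ^ n := by positivity
  have key : ∀ i, ∃ k : Fin 3, ⌊(2 : ℝ) ^ n * y i⌋ = ⌊(2 : ℝ) ^ n * x i⌋ + (((k : ℕ) : ℤ) - 1) := by
    intro i
    have h1 : |y i - x i| < ((2 : ℝ) ^ n)⁻¹ := by
      refine lt_of_le_of_lt ?_ (mem_ball.1 hy)
      rw [dist_eq_norm]
      simpa using PiLp.norm_apply_le (y - x) i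
    have h3 : |(2 : ℝ) ^ n * y i - 2 ^ n * x i| < 1 := by
      rw [← mul_sub, abs_mul, abs_of_pos h2]
      calc _ < (2 : ℝ) ^ n * (2 ^ n)⁻¹ := by gcongr
        _ = 1 := mul_inv_cancel₀ h2.ne'
    rw [abs_lt] at h3
    have a1 := Int.floor_le ((2 : ℝ) ^ n * y i)
    have a2 := Int.lt_floor_add_one ((2 : ℝ) ^ n * y i)
    have a3 := Int.floor_le ((2 : ℝ) ^ n * x i)
    have a4 := Int.lt_floor_add_one ((2 : ℝ) ^ n * x i)
    generalize ⌊(2 : ℝ) ^ n * y i⌋ = p at *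
    generalize ⌊(2 : ℝ) ^ n * x i⌋ = q at *
    have b1 : p < q + 2 := by
      have : (p : ℝ) < ((q + 2 : ℤ) : ℝ) := by push_cast; linarith
      exact_mod_cast this
    have b2 : q < p + 2 := by
      have : (q : ℝ) < ((p + 2 : ℤ) : ℝ) := by push_cast; linarith
      exact_mod_cast this
    refine ⟨⟨(p - q + 1).toNat, by omega⟩, ?_⟩
    simp only
    omega
  choose k hk using key
  refine mem_iUnion.2 ⟨k, mem_cell_iff.2 (funext fun i => ?_)⟩
  exact hk i

lemma Qcube_sub (d m : ℕ) (x : EuclideanSpace ℝ (Fin d)) :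
    Qcube d (m + d) x ⊆ ball x (((2 : ℝ) ^ m)⁻¹) := by
  intro y hy
  have h2 : (0 : ℝ) < 2 ^ (m + d) := by positivity
  have hc : ∀ i, dist (y i) (x i) ≤ ((2 : ℝ) ^ (m + d))⁻¹ := by
    intro i
    have hx := mem_Qcube (n := m + d) x i
    have hy := hy i
    rw [add_div, one_div] at hx hy
    rw [Real.dist_eq, abs_le]
    constructor <;> linarith
  rw [mem_ball, EuclideanSpace.dist_eq, Real.sqrt_lt' (by positivity)]
  calc ∑ i, dist (y i) (x i) ^ 2 ≤ ∑ i : Fin d, (((2 : ℝ) ^ (m + d))⁻¹) ^ 2 := by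
        gcongr with i; exact hc i
    _ = d * (((2 : ℝ) ^ (m + d))⁻¹) ^ 2 := by simp
    _ < ((2 : ℝ) ^ d) ^ 2 * (((2 : ℝ) ^ (m + d))⁻¹) ^ 2 := by
        gcongr
        have h3 : (d : ℝ) < 2 ^ d := by exact_mod_cast Nat.lt_two_pow_self
        have h4 : (1 : ℝ) ≤ 2 ^ d := one_le_pow₀ (by norm_num)
        nlinarith
    _ = (((2 : ℝ) ^ m)⁻¹) ^ 2 := by
        rw [pow_add]; field_simp

lemma ae_pos (d : ℕ) (μ : Measure (EuclideanSpace ℝ (Fin d))) :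
    ∀ᵐ x ∂μ, ∀ n, μ (Qcube d n x) ≠ 0 := by
  refine ae_all_iff.2 fun n => ?_
  have hs : {x | ¬ μ (Qcube d n x) ≠ 0} ⊆
      ⋃ j : {j : Fin d → ℤ // μ (dyadicCell d n j) = 0}, dyadicCell d n j := by
    intro x hx
    exact mem_iUnion.2 ⟨⟨dyadicIdx d n x, not_not.1 hx⟩, mem_Qcube x⟩
  exact measure_mono_null hs (measure_iUnion_null fun j => j.2)

lemma ae_ev (d : ℕ) (μ : Measure (EuclideanSpace ℝ (Fin d))) [IsProbabilityMeasure μ] :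
    ∀ᵐ x ∂μ, ∀ᶠ n : ℕ in atTop,
      μ (ball x (((2 : ℝ) ^ n)⁻¹)) ≤ ((n : ENNReal) + 1) ^ 2 * μ (Qcube d n x) := by
  set E : ℕ → Set (EuclideanSpace ℝ (Fin d)) := fun n =>
    {x | ((n : ENNReal) + 1) ^ 2 * μ (Qcube d n x) < μ (ball x (((2 : ℝ) ^ n)⁻¹))} with hE
  have hb : ∀ n, μ (E n) ≤ 3 ^ d * (((n : ENNReal) + 1) ^ 2)⁻¹ := by
    intro n
    have hsub : E n ⊆ ⋃ j, E n ∩ dyadicCell d n j :=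
      fun x hx => mem_iUnion.2 ⟨_, hx, mem_Qcube x⟩
    have hj : ∀ j, μ (E n ∩ dyadicCell d n j) ≤ (((n : ENNReal) + 1) ^ 2)⁻¹ *
        ∑ k : Fin d → Fin 3, μ (dyadicCell d n (j + fun i => ((k i : ℕ) : ℤ) - 1)) := by
      intro j
      rcases (E n ∩ dyadicCell d n j).eq_empty_or_nonempty with h | ⟨x, hx, hxj⟩
      · simp [h]
      · have hi := mem_cell_iff.1 hxj
        have hQ : Qcube d n x = dyadicCell d n j := by rw [Qcube, hi]
        refine (measure_mono inter_subset_right).trans ?_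
        rw [← ENNReal.div_eq_inv_mul, ENNReal.le_div_iff_mul_le (by simp) (by
          left; exact ENNReal.pow_ne_top (by simp)), mul_comm]
        have h1 : ((n : ENNReal) + 1) ^ 2 * μ (Qcube d n x) < μ (ball x (((2 : ℝ) ^ n)⁻¹)) := hx
        rw [hQ] at h1
        refine h1.le.trans ((measure_mono (ball_sub_cells d n x)).trans ?_)
        rw [hi]
        exact measure_iUnion_fintype_le _ _
    calc μ (E n) ≤ ∑' j, μ (E n ∩ dyadicCell d n j) :=
          (measure_mono hsub).trans (measure_iUnion_le _)
      _ ≤ ∑' j, (((n : ENNReal) + 1) ^ 2)⁻¹ *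
        ∑ k : Fin d → Fin 3, μ (dyadicCell d n (j + fun i => ((k i : ℕ) : ℤ) - 1)) :=
          ENNReal.tsum_le_tsum hj
      _ = (((n : ENNReal) + 1) ^ 2)⁻¹ * ∑ k : Fin d → Fin 3,
          ∑' j, μ (dyadicCell d n (j + fun i => ((k i : ℕ) : ℤ) - 1)) := by
          rw [ENNReal.tsum_mul_left, Summable.tsum_finsetSum (fun _ _ => ENNReal.summable)]
      _ = (((n : ENNReal) + 1) ^ 2)⁻¹ * ∑ k : Fin d → Fin 3, 1 := by
          congr 1
          refine Finset.sum_congr rfl fun k _ => ?_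
          rw [← tsum_cell n μ]
          exact (Equiv.addRight (fun i => ((k i : ℕ) : ℤ) - 1)).tsum_eq
            (fun j => μ (dyadicCell d n j))
      _ = 3 ^ d * (((n : ENNReal) + 1) ^ 2)⁻¹ := by
          simp [mul_comm]
  have hsum : ∑' n, μ (E n) ≠ ⊤ := by
    refine ne_top_of_le_ne_top ?_ (ENNReal.tsum_le_tsum hb)
    rw [ENNReal.tsum_mul_left]
    refine ENNReal.mul_ne_top (ENNReal.pow_ne_top (by simp)) ?_
    have hs : Summable fun n : ℕ => (((n : NNReal) + 1) ^ 2)⁻¹ := by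
      have h0 : Summable fun n : ℕ => ((n : NNReal) ^ 2)⁻¹ :=
        NNReal.summable_coe.1 (by
          push_cast
          exact Real.summable_nat_pow_inv.2 (by norm_num))
      have := NNReal.summable_nat_add _ h0 1
      simpa using this
    have := ENNReal.tsum_coe_ne_top_iff_summable.2 hs
    convert this using 3 with n
    rw [ENNReal.coe_inv (by positivity)]
    push_cast
    rfl
  filter_upwards [ae_eventually_notMem hsum] with x hx
  filter_upwards [hx] with n hn
  exact not_lt.1 hn

/-- For a Borel probability measure `μ` on `[0,1)^d` giving zero mass to
the boundary of every dyadic cube, for `μ`-a.e. `x` the upper (resp. lower) dyadic local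
dimension `limsup_n (−log₂ μ(Q_n(x)))/n` (resp. `liminf`) coincides with the usual upper
(resp. lower) local dimension computed with balls. -/
theorem stmt2 (d : ℕ) (hd : 0 < d) (μ : Measure (EuclideanSpace ℝ (Fin d)))
    [IsProbabilityMeasure μ] (hsupp : μ (unitCube d) = 1)
    (hbd : ∀ Q, IsDyadicCube d Q → μ (frontier Q) = 0) :
    ∀ᵐ x ∂μ,
      (Filter.limsup (fun n : ℕ =>
          ((-(Real.logb 2 (μ (Qcube d n x)).toReal) / n : ℝ) : EReal)) atTop
        = upperLocalDim μ x) ∧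
      (Filter.liminf (fun n : ℕ =>
          ((-(Real.logb 2 (μ (Qcube d n x)).toReal) / n : ℝ) : EReal)) atTop
        = lowerLocalDim μ x) := by
  filter_upwards [ae_pos d μ, ae_ev d μ] with x hpos hev
  have hQpos : ∀ n, 0 < (μ (Qcube d n x)).toReal := fun n =>
    ENNReal.toReal_pos (hpos n) (measure_ne_top _ _)
  have hBpos : ∀ r : ℝ, 0 < r → 0 < (μ (ball x r)).toReal := by
    intro r hr
    obtain ⟨m, hm⟩ := exists_pow_lt_of_lt_one hr (by norm_num : (1 / 2 : ℝ) < 1)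
    refine lt_of_lt_of_le (hQpos (m + d)) (ENNReal.toReal_mono (measure_ne_top _ _) ?_)
    refine measure_mono ((Qcube_sub d m x).trans (ball_subset_ball ?_))
    rw [one_div, inv_pow] at hm
    exact hm.le
  have main := analysis d (fun n => -(Real.logb 2 (μ (Qcube d n x)).toReal))
    (fun r => -(Real.logb 2 (μ (ball x r)).toReal)) ?_ ?_ ?_
  · have hf : ∀ r : ℝ, -(Real.logb 2 (μ (ball x r)).toReal) / (-Real.logb 2 r)
        = Real.log (μ (ball x r)).toReal / Real.log r := by
      intro r
      have hl : Real.log 2 ≠ 0 := (Real.log_pos (by norm_num)).ne'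
      rw [neg_div_neg_eq, Real.logb, Real.logb, div_div_div_cancel_right₀ hl]
    simp only [hf] at main
    exact main
  · intro r s hr hrs
    refine neg_le_neg (Real.logb_le_logb_of_le (by norm_num) (hBpos r hr) ?_)
    exact ENNReal.toReal_mono (measure_ne_top _ _) (measure_mono (ball_subset_ball hrs))
  · intro m
    refine neg_le_neg (Real.logb_le_logb_of_le (by norm_num) (hQpos _) ?_)
    exact ENNReal.toReal_mono (measure_ne_top _ _) (measure_mono (Qcube_sub d m x))
  · filter_upwards [hev] with n hn
    have h1 : (μ (ball x (((2 : ℝ) ^ n)⁻¹))).toReal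
        ≤ ((n : ℝ) + 1) ^ 2 * (μ (Qcube d n x)).toReal := by
      have h := ENNReal.toReal_mono (ENNReal.mul_ne_top (ENNReal.pow_ne_top (by simp))
        (measure_ne_top _ _)) hn
      rw [ENNReal.toReal_mul, ENNReal.toReal_pow, ENNReal.toReal_add (by simp) (by simp)] at h
      simpa using h
    have h2 := Real.logb_le_logb_of_le (b := 2) (by norm_num) (hBpos _ (by positivity)) h1
    rw [Real.logb_mul (by positivity) (hQpos n).ne', Real.logb_pow] at h2
    push_cast at h2
    linarith
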